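/- Let L be a finite lattice, with join-presentation (J(L), ≤, M), and let F_L = (J(L), σ_M) be its associated monotone neighbourhood frame, where σ_M(j) := {S ⊆ J(L) | ∃ C ∈ M(j), C ⊆ S}. Then for all lattice terms t and s over AtProp: L ⊨ t ≤ s (i.e., v(t) ≤ v(s) for every assignment v : AtProp → L) if and only if F_L ⊩ ST(t) ≤ ST(s), meaning that for every closed valuation u : AtProp → 𝔏_L and every j ∈ J(L), if (F_L, u), j ⊩ ST(t) then (F_L, u), j ⊩ ST(s). Here ST is defined by ST(p) = p, ST(⊤) = ⊤, ST(⊥) = ⊥, ST(t ∧ s) = ST(t) ∧ ST(s), ST(t ∨ s) = (∃∀)(ST(t) ∨ ST(s)). -/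

import Mathlib

/-- Formulas of monotone modal logic over atomic propositions `P`:
`φ ::= ⊥ | ⊤ | p | ¬φ | φ ∨ φ | φ ∧ φ | (∃∀)φ | (∀∃)φ`. -/
inductive MForm (P : Type*) where
  | bot : MForm P
  | top : MForm P
  | atom (p : P) : MForm P
  | neg (φ : MForm P) : MForm P
  | or (φ ψ : MForm P) : MForm P
  | and (φ ψ : MForm P) : MForm P
  | exAll (φ : MForm P) : MForm P
  | allEx (φ : MForm P) : MForm P

/-- Satisfaction of a monotone modal formula at a state `w` of a neighbourhood
model `((X, σ), v)`. -/
def MSat {X P : Type*} (σ : X → Set (Set X)) (v : P → Set X) :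
    MForm P → X → Prop
  | .bot, _ => False
  | .top, _ => True
  | .atom p, w => w ∈ v p
  | .neg φ, w => ¬ MSat σ v φ w
  | .or φ ψ, w => MSat σ v φ w ∨ MSat σ v ψ w
  | .and φ ψ, w => MSat σ v φ w ∧ MSat σ v ψ w
  | .exAll φ, w => ∃ C ∈ σ w, ∀ c ∈ C, MSat σ v φ c
  | .allEx φ, w => ∀ C ∈ σ w, ∃ c ∈ C, MSat σ v φ c

/-- Lattice terms over atomic propositions `P`: `t ::= ⊥ | ⊤ | p | t ∨ t | t ∧ t`. -/
inductive LTerm (P : Type*) where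
  | bot : LTerm P
  | top : LTerm P
  | atom (p : P) : LTerm P
  | or (t s : LTerm P) : LTerm P
  | and (t s : LTerm P) : LTerm P

/-- Interpretation of a lattice term in a lattice `L` under an assignment `v`. -/
def LTerm.interp {L P : Type*} [Lattice L] [BoundedOrder L] (v : P → L) :
    LTerm P → L
  | .bot => ⊥
  | .top => ⊤
  | .atom p => v p
  | .or t s => t.interp v ⊔ s.interp v
  | .and t s => t.interp v ⊓ s.interp v

/-- The standard translation from lattice terms to monotone modal formulas:
`STr(p) = p`, `STr(⊤) = ⊤`, `STr(⊥) = ⊥`, `STr(t ∧ s) = STr(t) ∧ STr(s)`,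
`STr(t ∨ s) = (∃∀)(STr(t) ∨ STr(s))`. -/
def STr {P : Type*} : LTerm P → MForm P
  | .bot => .bot
  | .top => .top
  | .atom p => .atom p
  | .or t s => .exAll (.or (STr t) (STr s))
  | .and t s => .and (STr t) (STr s)

/-- The refinement relation: `A ≪ B` iff every element of `A` is below some element of `B`. -/
def Refines {L : Type*} [Preorder L] (A B : Set L) : Prop :=
  ∀ a ∈ A, ∃ b ∈ B, a ≤ b

/-- An element `j ≠ ⊥` is join-irreducible if `j = a ∨ b` implies `j = a` or `j = b`. -/
def JoinIrr {L : Type*} [Lattice L] [OrderBot L] (j : L) : Prop :=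
  j ≠ ⊥ ∧ ∀ a b : L, j = a ⊔ b → j = a ∨ j = b

/-- `C` is a minimal join-cover of `a`: `C` is a join-cover of `a` (`a ≤ ⋁C`), `C` is an
`≤`-antichain, and every `≤`-antichain `D` with `a ≤ ⋁D` and `D ≪ C` equals `C`. -/
def MinJoinCover {L : Type*} [CompleteLattice L] (a : L) (C : Set L) : Prop :=
  a ≤ sSup C ∧ IsAntichain (· ≤ ·) C ∧
    ∀ D : Set L, IsAntichain (· ≤ ·) D → a ≤ sSup D → Refines D C → D = C

/-- The neighbourhood function of the monotone neighbourhood frame `F_L` associated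
with a finite lattice `L`: the states are the join-irreducibles of `L` and
`σ_M(j) := {S ⊆ J(L) | ∃ C ∈ M(j), C ⊆ S}`. -/
def sigmaM {L : Type*} [CompleteLattice L] (j : {x : L // JoinIrr x}) :
    Set (Set {x : L // JoinIrr x}) :=
  {S | ∃ C : Set L, MinJoinCover (j : L) C ∧ C ⊆ Subtype.val '' S}

/-- The closure map of the join-presentation of `L`, acting on subsets of the
type `J(L)` of join-irreducibles: `cl(S) := {j ∈ J(L) | ∃ C ∈ M(j), C ⊆ S}`. -/
def clJsub {L : Type*} [CompleteLattice L] (S : Set {x : L // JoinIrr x}) :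
    Set {x : L // JoinIrr x} :=
  {j | ∃ C : Set L, MinJoinCover (j : L) C ∧ C ⊆ Subtype.val '' S}

/-!
Sending `a` to the set `irrBelow a` of join-irreducibles below it identifies `L` with the lattice of
closed downsets. Under this identification the closure of a downset is the supremum in `L`, and
`(∃∀)` is closure of the truth set, so `STr t` holds at `j` exactly when `j` is below the value of
`t`. That closures are suprema rests on refining every join-cover to a minimal one consisting of
join-irreducibles. Under both chain conditions such a cover is obtained as a finite refinement that
is minimal for the Dershowitz–Manna order.
-/

section Cofinal

variable {α : Type*} [PartialOrder α]

theorem exists_finset_subset_isAntichain_isCofinalFor (F : Finset α) :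
    ∃ E ⊆ F, IsAntichain (· ≤ ·) (E : Set α) ∧ IsCofinalFor (F : Set α) E := by
  classical
  refine ⟨{x ∈ F | Maximal (· ∈ F) x}, Finset.filter_subset _ _, ?_, fun x hx => ?_⟩
  · exact (setOfPred_maximal_antichain (· ∈ F)).subset fun x hx => (Finset.mem_filter.1 hx).2
  · obtain ⟨m, hxm, hm⟩ := F.exists_le_maximal hx
    exact ⟨m, Finset.mem_filter.2 ⟨hm.prop, hm⟩, hxm⟩

theorem isDershowitzMannaLT_of_isCofinalFor {E F : Finset α}
    (hEF : IsCofinalFor (E : Set α) F) (hE : IsAntichain (· ≤ ·) (E : Set α)) (hFE : ¬F ⊆ E) :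
    Multiset.IsDershowitzMannaLT E.val F.val := by
  classical
  refine ⟨(E ∩ F).val, (E \ F).val, (F \ E).val, ?_, ?_, ?_, fun e he => ?_⟩
  · rwa [Multiset.empty_eq_zero, ne_eq, Finset.val_eq_zero, Finset.sdiff_eq_empty_iff_subset]
  · rw [Finset.inter_val, Finset.sdiff_val, add_comm, Multiset.sub_add_inter]
  · rw [Finset.inter_comm, Finset.inter_val, Finset.sdiff_val, add_comm, Multiset.sub_add_inter]
  · obtain ⟨heE, heF⟩ := Finset.mem_sdiff.1 he
    obtain ⟨f, hf, hef⟩ := hEF heE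
    have hne : e ≠ f := fun h => heF (h ▸ hf)
    exact ⟨f, Finset.mem_sdiff.2 ⟨hf, fun hfE => hE heE hfE hne hef⟩, hef.lt_of_ne hne⟩

end Cofinal

section Nonrefinable

variable {L : Type*} [CompleteLattice L] {a c : L} {C : Set L}

/-- A join-cover `C` of `a` is *nonrefinable* if it is contained in every join-cover of `a` that
refines it. Unlike in `MinJoinCover`, neither `C` nor the competing covers are required to be
antichains. Refinement is Mathlib's `IsCofinalFor`, to which `Refines` unfolds. -/
def NonrefinableJoinCover (a : L) (C : Set L) : Prop :=
  a ≤ sSup C ∧ ∀ D : Set L, a ≤ sSup D → IsCofinalFor D C → C ⊆ D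

namespace NonrefinableJoinCover

theorem not_le_sSup_Iio_union (hC : NonrefinableJoinCover a C) (hc : c ∈ C) :
    ¬c ≤ sSup (Set.Iio c ∪ C \ {c}) := by
  intro hle
  have hcover : a ≤ sSup (Set.Iio c ∪ C \ {c}) := hC.1.trans <| sSup_le fun x hx => by
    by_cases hxc : x = c
    · exact hxc ▸ hle
    · exact le_sSup (.inr ⟨hx, hxc⟩)
  have hcofinal : IsCofinalFor (Set.Iio c ∪ C \ {c}) C := by
    rintro x (hx | hx)
    · exact ⟨c, hc, hx.le⟩
    · exact ⟨x, hx.1, le_rfl⟩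
  simpa using hC.2 _ hcover hcofinal hc

theorem isAntichain (hC : NonrefinableJoinCover a C) : IsAntichain (· ≤ ·) C :=
  fun _ hx _ hy hne hxy =>
    hC.not_le_sSup_Iio_union hx (hxy.trans (le_sSup (.inr ⟨hy, hne.symm⟩)))

theorem joinIrr (hC : NonrefinableJoinCover a C) (hc : c ∈ C) : JoinIrr c := by
  have hnot := hC.not_le_sSup_Iio_union hc
  refine ⟨fun h => hnot (h ▸ bot_le), fun x y hxy => ?_⟩
  by_contra! ⟨hx, hy⟩
  have hxc : x < c := (hxy ▸ le_sup_left).lt_of_ne hx.symm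
  have hyc : y < c := (hxy ▸ le_sup_right).lt_of_ne hy.symm
  exact hnot (hxy.trans_le (sup_le (le_sSup (.inl hxc)) (le_sSup (.inl hyc))))

theorem minJoinCover (hC : NonrefinableJoinCover a C) : MinJoinCover a C := by
  refine ⟨hC.1, hC.isAntichain, fun D hD haD hDC => ?_⟩
  have hCD : C ⊆ D := hC.2 D haD hDC
  refine Set.Subset.antisymm (fun d hd => ?_) hCD
  obtain ⟨c, hc, hdc⟩ := hDC d hd
  exact hD.eq hd (hCD hc) hdc ▸ hc

end NonrefinableJoinCover

theorem exists_finset_antichain_sSup_eq [WellFoundedGT L] (S : Set L) :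
    ∃ E : Finset L, (E : Set L) ⊆ S ∧ IsAntichain (· ≤ ·) (E : Set L) ∧
      sSup (E : Set L) = sSup S := by
  obtain ⟨F, hFS, hF⟩ := CompleteLattice.WellFoundedGT.isSupFiniteCompact L S
  obtain ⟨E, hEF, hE, hFE⟩ := exists_finset_subset_isAntichain_isCofinalFor F
  refine ⟨E, fun x hx => hFS (hEF hx), hE, le_antisymm (sSup_le_sSup fun x hx => hFS (hEF hx)) ?_⟩
  rw [hF, Finset.sup_id_eq_sSup]
  exact sSup_le_sSup_of_isCofinalFor hFE

theorem exists_nonrefinableJoinCover_isCofinalFor [WellFoundedLT L] [WellFoundedGT L] {S : Set L}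
    (h : a ≤ sSup S) : ∃ C, NonrefinableJoinCover a C ∧ IsCofinalFor C S := by
  let covers : Set (Finset L) := {F | a ≤ sSup (F : Set L) ∧ IsCofinalFor (F : Set L) S}
  have hcovers : covers.Nonempty := by
    obtain ⟨E, hES, -, hE⟩ := exists_finset_antichain_sSup_eq S
    exact ⟨E, hE ▸ h, .of_subset hES⟩
  obtain ⟨F, ⟨haF, hFS⟩, hmin⟩ :=
    (InvImage.wf Finset.val Multiset.wellFounded_isDershowitzMannaLT).has_min covers hcovers
  refine ⟨F, ⟨haF, fun D haD hDF => ?_⟩, hFS⟩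
  obtain ⟨E, hED, hE, hsup⟩ := exists_finset_antichain_sSup_eq D
  have hEF : IsCofinalFor (E : Set L) F := (IsCofinalFor.of_subset hED).trans hDF
  have hFE : F ⊆ E := by
    by_contra hFE
    exact hmin E ⟨hsup ▸ haD, hEF.trans hFS⟩ (isDershowitzMannaLT_of_isCofinalFor hEF hE hFE)
  exact fun x hx => hED (hFE hx)

end Nonrefinable

section IrrBelow

variable {L : Type*} [Lattice L] [OrderBot L] {a : L}

theorem joinIrr_of_supIrred (h : SupIrred a) : JoinIrr a :=
  ⟨h.ne_bot, fun _ _ hxy => (h.2 hxy.symm).imp Eq.symm Eq.symm⟩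

/-- The set of join-irreducibles below `a`. As `a` varies, these are the closed downsets of the
join-presentation of `L`. -/
def irrBelow (a : L) : Set {x : L // JoinIrr x} :=
  {j | (j : L) ≤ a}

theorem mem_irrBelow {j : {x : L // JoinIrr x}} : j ∈ irrBelow a ↔ (j : L) ≤ a :=
  Iff.rfl

theorem isLowerSet_irrBelow (a : L) : IsLowerSet (irrBelow a) :=
  fun _ _ hkj hj => le_trans (Subtype.coe_le_coe.2 hkj) hj

end IrrBelow

section JoinPresentation

variable {L : Type*} [CompleteLattice L] {a b : L} {S : Set {x : L // JoinIrr x}}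

theorem sSup_image_irrBelow [WellFoundedLT L] (a : L) : sSup (Subtype.val '' irrBelow a) = a := by
  refine le_antisymm (sSup_le (by rintro _ ⟨j, hj, rfl⟩; exact hj)) ?_
  obtain ⟨F, rfl, hF⟩ := exists_supIrred_decomposition a
  exact Finset.sup_le fun x hx =>
    le_sSup ⟨⟨x, joinIrr_of_supIrred (hF hx)⟩, Finset.le_sup (f := id) hx, rfl⟩

theorem irrBelow_subset_irrBelow [WellFoundedLT L] : irrBelow a ⊆ irrBelow b ↔ a ≤ b := by
  refine ⟨fun h => ?_, fun h j hj => le_trans hj h⟩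
  rw [← sSup_image_irrBelow a, ← sSup_image_irrBelow b]
  exact sSup_le_sSup (Set.image_mono h)

variable [WellFoundedLT L] [WellFoundedGT L]

theorem clJsub_eq_irrBelow_sSup (hS : IsLowerSet S) :
    clJsub S = irrBelow (sSup (Subtype.val '' S)) := by
  ext j
  constructor
  · rintro ⟨C, hC, hCS⟩
    exact hC.1.trans (sSup_le_sSup hCS)
  · intro hj
    obtain ⟨C, hC, hCS⟩ := exists_nonrefinableJoinCover_isCofinalFor hj
    refine ⟨C, hC.minJoinCover, fun c hc => ⟨⟨c, hC.joinIrr hc⟩, ?_, rfl⟩⟩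
    obtain ⟨_, ⟨k, hk, rfl⟩, hck⟩ := hCS hc
    exact hS (Subtype.coe_le_coe.1 hck) hk

theorem exists_irrBelow_eq_iff :
    (∃ a, irrBelow a = S) ↔ IsLowerSet S ∧ clJsub S = S := by
  constructor
  · rintro ⟨a, rfl⟩
    exact ⟨isLowerSet_irrBelow a, by
      rw [clJsub_eq_irrBelow_sSup (isLowerSet_irrBelow a), sSup_image_irrBelow]⟩
  · rintro ⟨hlower, hclosed⟩
    exact ⟨_, (clJsub_eq_irrBelow_sSup hlower).symm.trans hclosed⟩

theorem clJsub_irrBelow_union (a b : L) : clJsub (irrBelow a ∪ irrBelow b) = irrBelow (a ⊔ b) := by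
  rw [clJsub_eq_irrBelow_sSup ((isLowerSet_irrBelow a).union (isLowerSet_irrBelow b)),
    Set.image_union, sSup_union, sSup_image_irrBelow, sSup_image_irrBelow]

end JoinPresentation

section Translation

variable {L P : Type*} [CompleteLattice L]

theorem setOf_mSat_sigmaM_exAll (u : P → Set {x : L // JoinIrr x}) (φ : MForm P) :
    {j | MSat sigmaM u φ.exAll j} = clJsub {j | MSat sigmaM u φ j} := by
  ext j
  constructor
  · rintro ⟨S, ⟨C, hC, hCS⟩, hS⟩
    exact ⟨C, hC, hCS.trans (Set.image_mono hS)⟩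
  · exact fun hj => ⟨_, hj, fun _ hk => hk⟩

variable [WellFoundedLT L] [WellFoundedGT L]

theorem setOf_mSat_sTr (v : P → L) (t : LTerm P) :
    {j | MSat sigmaM (fun p => irrBelow (v p)) (STr t) j} = irrBelow (t.interp v) := by
  induction t with
  | bot => exact Set.ext fun j => iff_of_false id fun hj => j.2.1 (le_bot_iff.1 hj)
  | top => exact Set.ext fun j => iff_of_true trivial le_top
  | atom p => rfl
  | or t s iht ihs =>
    rw [STr, setOf_mSat_sigmaM_exAll, LTerm.interp, ← clJsub_irrBelow_union, ← iht, ← ihs]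
    rfl
  | and t s iht ihs =>
    ext j
    rw [LTerm.interp, mem_irrBelow, le_inf_iff, ← mem_irrBelow, ← mem_irrBelow, ← iht, ← ihs]
    rfl

theorem standard_translation_global_general (t s : LTerm P) :
    (∀ v : P → L, t.interp v ≤ s.interp v) ↔
      (∀ u : P → Set {x : L // JoinIrr x},
        (∀ p : P, IsLowerSet (u p) ∧ clJsub (u p) = u p) →
        ∀ j : {x : L // JoinIrr x},
          MSat sigmaM u (STr t) j → MSat sigmaM u (STr s) j) := by
  simp only [← exists_irrBelow_eq_iff, ← irrBelow_subset_irrBelow, ← setOf_mSat_sTr]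
  constructor
  · intro h u hu
    choose v hv using hu
    obtain rfl : (fun p => irrBelow (v p)) = u := funext hv
    exact h v
  · exact fun h v => h _ fun p => ⟨v p, rfl⟩

end Translation

/-- For a finite lattice `L` and lattice terms `t, s` over `AtProp`:
`L ⊨ t ≤ s` (i.e. `v(t) ≤ v(s)` for every assignment `v`) iff
`F_L ⊩ ST(t) ≤ ST(s)`, i.e. for every closed valuation `u` (mapping each atomic
proposition to a closed downset of the join-presentation) and every
join-irreducible `j`, if `(F_L, u), j ⊩ ST(t)` then `(F_L, u), j ⊩ ST(s)`. -/
theorem standard_translation_global {L P : Type*} [CompleteLattice L] [Fintype L]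
    (t s : LTerm P) :
    (∀ v : P → L, t.interp v ≤ s.interp v) ↔
      (∀ u : P → Set {x : L // JoinIrr x},
        (∀ p : P, IsLowerSet (u p) ∧ clJsub (u p) = u p) →
        ∀ j : {x : L // JoinIrr x},
          MSat sigmaM u (STr t) j → MSat sigmaM u (STr s) j) :=
  standard_translation_global_general t s
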